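/- (Theorem 1, part 3) In a hidden Markov tree, for every non-leaf node n, every label y_n ∈ {0,1} and every assignment of labels y_{k∈P_n} to its parents, the unnormalized quantity P′(y_n, y_{k∈P_n}) := [∏_{k∈P_n} f_k^o(y_k)] · g_n^o(y_n) · P(y_n | y_{k∈P_n}) equals the joint probability P(X, y_n, y_{k∈P_n}) of all feature likelihood factors together with the labels of n and its parents, i.e. the sum of ∏_{m=1}^N P(x_m|y_m) · ∏_{m=1}^N P(y_m | y_{k∈P_m}) over all labelings of the remaining nodes. -/

import Mathlib

/-!
Put `w_m(Y) = P(x_m | Y_m) · P(Y_m | parents)`, so that the joint probability of `Y` is `∏ w_m(Y)`.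
The factor `w_m` involves only the labels of `m` and of its parents. Fixing the labels of `n` and
of its parents therefore separates the remaining nodes into the complement `pre n` of the tree
above `n`, and, for each parent `k` of `n`, the strict subtree above `k`; no factor mixes labels
from two of these blocks. Hence the marginal is the product of `w_n`, of the sum over the labels
on `pre n` of `∏_{m ∈ pre n} w_m`, and, for each `k`, of the sum over the labels strictly above `k`
of `∏_{m ∈ tree k} w_m`.

The last sums are the messages `f_k^o` (`HMT.forward`, by induction from the leaves to the root),
and the sum over `pre n` is `g_n^i` (`HMT.backward`, by induction from the root to the leaves: with
`c` the child of `n`, `pre n` consists of `c`, of `pre c` and of the trees above the siblings of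
`n`). All three steps sum out the subtrees above several parents of one node, which is
`HMT.sumOver_subtrees`.
-/

open Finset

/-- A finite reverse tree: every node has at most one child (`child n = none` only
for the unique root), and the parent relation (`child k = some n` meaning `k` is a
parent of `n`) is acyclic. -/
structure RevTree (N : ℕ) where
  child : Fin N → Option (Fin N)
  acyclic : ∀ n : Fin N, ¬ Relation.TransGen (fun a b => child a = some b) n n
  root : Fin N
  child_root : child root = none
  root_unique : ∀ n : Fin N, child n = none → n = root

namespace RevTree

variable {N : ℕ}

/-- The set of parents of a node. -/
def parents (T : RevTree N) (n : Fin N) : Finset (Fin N) :=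
  Finset.univ.filter fun k => T.child k = some n

/-- A leaf is a node with no parents. -/
def IsLeaf (T : RevTree N) (n : Fin N) : Prop :=
  T.parents n = ∅

instance (T : RevTree N) (n : Fin N) : Decidable (T.IsLeaf n) :=
  inferInstanceAs (Decidable (T.parents n = ∅))

open scoped Classical in
/-- `tree n`: all nodes from which `n` is reachable by following child edges,
including `n` itself. -/
noncomputable def tree (T : RevTree N) (n : Fin N) : Finset (Fin N) :=
  Finset.univ.filter fun m =>
    Relation.ReflTransGen (fun a b => T.child a = some b) m n

/-- `subtree n = tree n \ {n}`: the strict descendants (in the parent direction). -/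
noncomputable def subtree (T : RevTree N) (n : Fin N) : Finset (Fin N) :=
  T.tree n \ {n}

/-- `pre n`: complement of `tree n`. -/
noncomputable def pre (T : RevTree N) (n : Fin N) : Finset (Fin N) :=
  Finset.univ \ T.tree n

/-- `passed n`: complement of `subtree n`. -/
noncomputable def passed (T : RevTree N) (n : Fin N) : Finset (Fin N) :=
  Finset.univ \ T.subtree n

/-- The siblings of `n` with respect to its child `c`: the other parents of `c`. -/
def siblings (T : RevTree N) (n c : Fin N) : Finset (Fin N) :=
  T.parents c \ {n}

end RevTree

/-- Leaf class prior `P(y) = π^y (1-π)^(1-y)`. -/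
noncomputable def leafPrior (π : ℝ) (y : Fin 2) : ℝ :=
  π ^ (y : ℕ) * (1 - π) ^ (1 - (y : ℕ))

/-- Class transition probability of a node with label `y` given the product `z`
of its parents' labels: `ρ^(yz) (1-ρ)^((1-y)z) 0^(y(1-z)) 1^((1-y)(1-z))`
(note `(0:ℝ)^0 = 1`). -/
noncomputable def transProb (ρ : ℝ) (y z : ℕ) : ℝ :=
  ρ ^ (y * z) * (1 - ρ) ^ ((1 - y) * z) * (0 : ℝ) ^ (y * (1 - z)) *
    (1 : ℝ) ^ ((1 - y) * (1 - z))

/-- The class factor of node `n` in a full labeling `Y`: the leaf prior for leaves,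
and the transition probability given the product of the parents' labels otherwise. -/
noncomputable def nodeFactor {N : ℕ} (T : RevTree N) (π ρ : ℝ) (Y : Fin N → Fin 2)
    (n : Fin N) : ℝ :=
  if T.IsLeaf n then leafPrior π (Y n)
  else transProb ρ (Y n : ℕ) (∏ k ∈ T.parents n, (Y k : ℕ))

/-- The marginal `P(x_S, y_T)`: sum over all labelings agreeing with `σ` on `Tset`
of the product of the feature likelihoods over `S` times the product of all class
factors. -/
noncomputable def marginal {N : ℕ} (T : RevTree N) (π ρ : ℝ) (px : Fin N → Fin 2 → ℝ)
    (S Tset : Finset (Fin N)) (σ : Fin N → Fin 2) : ℝ :=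
  ∑ Y ∈ Finset.univ.filter (fun Y : Fin N → Fin 2 => ∀ t ∈ Tset, Y t = σ t),
    (∏ m ∈ S, px m (Y m)) * ∏ m, nodeFactor T π ρ Y m

/-- Assignments of binary labels to the nodes in `S` (encoded as functions on all
nodes that are `0` outside `S`, so each assignment to `S` occurs exactly once). -/
def assignments {N : ℕ} (S : Finset (Fin N)) : Finset (Fin N → Fin 2) :=
  Finset.univ.filter fun u => ∀ k ∉ S, u k = 0

namespace HMT

variable {N : ℕ}

/-! ### Partial sums over labelings -/

/-- The sum of `F` over all labelings which agree with `σ` outside `A`: the labels on `A` are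
summed out, the others are frozen at their values in `σ`. -/
def sumOver (A : Finset (Fin N)) (F : (Fin N → Fin 2) → ℝ) (σ : Fin N → Fin 2) : ℝ :=
  ∑ Y ∈ univ.filter (fun Y : Fin N → Fin 2 => ∀ i, i ∉ A → Y i = σ i), F Y

/-- `F` does not depend on the labels of the nodes in `A`. -/
def Ignores (F : (Fin N → Fin 2) → ℝ) (A : Finset (Fin N)) : Prop :=
  ∀ Y Y' : Fin N → Fin 2, (∀ i, i ∉ A → Y i = Y' i) → F Y = F Y'

lemma Ignores.mul {F G : (Fin N → Fin 2) → ℝ} {A : Finset (Fin N)}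
    (hF : Ignores F A) (hG : Ignores G A) : Ignores (fun Y => F Y * G Y) A :=
  fun Y Y' h => congrArg₂ (· * ·) (hF Y Y' h) (hG Y Y' h)

lemma Ignores.prod {ι : Type*} {s : Finset ι} {F : ι → (Fin N → Fin 2) → ℝ}
    {A : Finset (Fin N)} (hF : ∀ i ∈ s, Ignores (F i) A) :
    Ignores (fun Y => ∏ i ∈ s, F i Y) A :=
  fun Y Y' h => prod_congr rfl fun i hi => hF i hi Y Y' h

lemma ignores_label {A : Finset (Fin N)} {k : Fin N} (hk : k ∉ A) (f : Fin 2 → ℝ) :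
    Ignores (fun Y => f (Y k)) A :=
  fun _ _ h => congrArg f (h k hk)

lemma sumOver_congr {A : Finset (Fin N)} {F G : (Fin N → Fin 2) → ℝ} (h : ∀ Y, F Y = G Y)
    (σ : Fin N → Fin 2) : sumOver A F σ = sumOver A G σ :=
  sum_congr rfl fun Y _ => h Y

lemma sumOver_empty (F : (Fin N → Fin 2) → ℝ) (σ : Fin N → Fin 2) : sumOver ∅ F σ = F σ := by
  have : univ.filter (fun Y : Fin N → Fin 2 => ∀ i, i ∉ (∅ : Finset (Fin N)) → Y i = σ i)
      = {σ} := by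
    ext Y
    simp [funext_iff]
  simp only [sumOver, this, sum_singleton]

lemma sumOver_mul {A : Finset (Fin N)} {F : (Fin N → Fin 2) → ℝ} (hF : Ignores F A)
    (G : (Fin N → Fin 2) → ℝ) (σ : Fin N → Fin 2) :
    sumOver A (fun Y => F Y * G Y) σ = F σ * sumOver A G σ := by
  unfold sumOver
  rw [mul_sum]
  refine sum_congr rfl fun Y hY => ?_
  exact congrArg (· * G Y) (hF Y σ (mem_filter.1 hY).2)

lemma sumOver_union {A B : Finset (Fin N)} (hAB : Disjoint A B)
    (F : (Fin N → Fin 2) → ℝ) (σ : Fin N → Fin 2) :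
    sumOver (A ∪ B) F σ = sumOver A (sumOver B F) σ := by
  unfold sumOver
  -- Fibre the labelings over their restriction to `A`, extended by `σ`.
  rw [← sum_fiberwise_of_maps_to
    (t := univ.filter (fun Y : Fin N → Fin 2 => ∀ i, i ∉ A → Y i = σ i))
    (g := fun (Y : Fin N → Fin 2) i => if i ∈ B then σ i else Y i)]
  · refine sum_congr rfl fun Z hZ => sum_congr ?_ fun _ _ => rfl
    have hZ := (mem_filter.1 hZ).2
    ext Y
    simp only [mem_filter, mem_univ, true_and, mem_union, funext_iff]
    constructor
    · rintro ⟨_, h⟩ i hi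
      simpa [hi] using h i
    · intro h
      refine ⟨fun i hi => ?_, fun i => ?_⟩
      · push Not at hi
        rw [h i hi.2, hZ i hi.1]
      · split_ifs with hi
        · exact (hZ i (disjoint_right.1 hAB hi)).symm
        · exact h i hi
  · intro Y hY
    have hY := (mem_filter.1 hY).2
    simp only [mem_filter, mem_univ, true_and]
    intro i hi
    split_ifs with hB
    · rfl
    · exact hY i (by simp [hi, hB])

lemma sumOver_singleton (c : Fin N) (F : (Fin N → Fin 2) → ℝ) (σ : Fin N → Fin 2) :
    sumOver {c} F σ = ∑ y : Fin 2, F (Function.update σ c y) := by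
  unfold sumOver
  symm
  refine sum_bij' (fun y _ => Function.update σ c y) (fun Y _ => Y c) ?_ ?_ ?_ ?_ ?_
  · intro y _
    simp only [mem_filter, mem_univ, true_and, mem_singleton]
    intro i hi
    simp [hi]
  · simp
  · simp
  · intro Y hY
    have hY := (mem_filter.1 hY).2
    funext i
    by_cases hi : i = c
    · subst hi; simp
    · simp [hi, hY i (by simpa using hi)]
  · simp

/-- Summing over `assignments A` is summing out `A`: extend an assignment by `σ` instead of
by `0`. -/
lemma sumOver_eq_assignments {A : Finset (Fin N)} (F H : (Fin N → Fin 2) → ℝ)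
    (σ : Fin N → Fin 2)
    (hFH : ∀ Y u : Fin N → Fin 2, (∀ i, i ∉ A → Y i = σ i) → (∀ i ∈ A, Y i = u i) → F Y = H u) :
    sumOver A F σ = ∑ u ∈ assignments A, H u := by
  unfold sumOver assignments
  refine sum_bij' (fun Y _ i => if i ∈ A then Y i else 0) (fun u _ i => if i ∈ A then u i else σ i)
    ?_ ?_ ?_ ?_ ?_
  · intro Y _
    simp +contextual
  · intro u _
    simp +contextual
  · intro Y hY
    have hY := (mem_filter.1 hY).2
    funext i
    by_cases hi : i ∈ A <;> simp [hi, hY]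
  · intro u hu
    have hu := (mem_filter.1 hu).2
    funext i
    by_cases hi : i ∈ A <;> simp [hi, hu]
  · intro Y hY
    exact hFH _ _ (mem_filter.1 hY).2 fun i hi => by simp [hi]

/-! ### Combinatorics of reverse trees -/

variable (T : RevTree N)

lemma mem_parents {k n : Fin N} : k ∈ T.parents n ↔ T.child k = some n := by
  simp [RevTree.parents]

lemma mem_tree {m n : Fin N} :
    m ∈ T.tree n ↔ Relation.ReflTransGen (fun a b => T.child a = some b) m n := by
  simp [RevTree.tree]

lemma mem_subtree {m n : Fin N} : m ∈ T.subtree n ↔ m ∈ T.tree n ∧ m ≠ n := by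
  simp [RevTree.subtree]

lemma mem_pre {m n : Fin N} : m ∈ T.pre n ↔ m ∉ T.tree n := by
  simp [RevTree.pre]

lemma mem_siblings {k n c : Fin N} : k ∈ T.siblings n c ↔ T.child k = some c ∧ k ≠ n := by
  simp [RevTree.siblings, mem_parents]

lemma self_mem_tree (n : Fin N) : n ∈ T.tree n := (mem_tree T).2 .refl

lemma mem_tree_of_child {k m n : Fin N} (h : T.child k = some m) (hm : m ∈ T.tree n) :
    k ∈ T.tree n :=
  (mem_tree T).2 (.head h ((mem_tree T).1 hm))

lemma eq_or_child_mem_tree {m n : Fin N} (h : m ∈ T.tree n) :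
    m = n ∨ ∃ c, T.child m = some c ∧ c ∈ T.tree n := by
  rcases Relation.ReflTransGen.cases_head ((mem_tree T).1 h) with h | ⟨c, h, h'⟩
  · exact .inl h
  · exact .inr ⟨c, h, (mem_tree T).2 h'⟩

lemma mem_tree_iff {m n : Fin N} :
    m ∈ T.tree n ↔ m = n ∨ ∃ k, T.child k = some n ∧ m ∈ T.tree k := by
  constructor
  · intro h
    rcases Relation.ReflTransGen.cases_tail ((mem_tree T).1 h) with h | ⟨c, h, h'⟩
    · exact .inl h.symm
    · exact .inr ⟨c, h', (mem_tree T).2 h⟩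
  · rintro (rfl | ⟨k, hk, hm⟩)
    · exact self_mem_tree T m
    · exact (mem_tree T).2 (((mem_tree T).1 hm).tail hk)

lemma not_mem_tree_of_child {k n : Fin N} (h : T.child k = some n) : n ∉ T.tree k := fun hn =>
  T.acyclic n (Relation.TransGen.tail' ((mem_tree T).1 hn) h)

/-- Since every node has at most one child, the trees above two distinct parents of the same
node are disjoint. -/
lemma eq_of_mem_trees {k k' n m : Fin N} (h : T.child k = some n) (h' : T.child k' = some n)
    (hm : m ∈ T.tree k) (hm' : m ∈ T.tree k') : k = k' := by
  have aux : ∀ {a b : Fin N}, T.child a = some n → T.child b = some n →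
      Relation.ReflTransGen (fun a b => T.child a = some b) a b → a = b := by
    intro a b ha hb hab
    rcases Relation.ReflTransGen.cases_head hab with hab | ⟨c, hc, hcb⟩
    · exact hab
    · obtain rfl : c = n := Option.some.inj (hc.symm.trans ha)
      exact absurd ((mem_tree T).2 hcb) (not_mem_tree_of_child T hb)
  have hru : Relator.RightUnique (fun a b => T.child a = some b) :=
    fun a b c hb hc => Option.some.inj (hb.symm.trans hc)
  rcases Relation.ReflTransGen.total_of_right_unique hru ((mem_tree T).1 hm)
    ((mem_tree T).1 hm') with h1 | h1
  · exact aux h h' h1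
  · exact (aux h' h h1).symm

lemma not_mem_subtree_of_siblings {k k' n : Fin N} (h : T.child k = some n)
    (h' : T.child k' = some n) : k ∉ T.subtree k' := fun hk =>
  ((mem_subtree T).1 hk).2
    (eq_of_mem_trees T h h' (self_mem_tree T k) ((mem_subtree T).1 hk).1)

/-- Induction from the leaves towards the root. -/
lemma parents_induction {p : Fin N → Prop}
    (step : ∀ n, (∀ k, T.child k = some n → p k) → p n) (n : Fin N) : p n := by
  let r : Fin N → Fin N → Prop := Relation.TransGen (fun a b => T.child a = some b)
  have : Std.Irrefl r := ⟨T.acyclic⟩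
  exact (Finite.wellFounded_of_trans_of_irrefl r).induction n
    fun n ih => step n fun k hk => ih k (.single hk)

/-- Induction from the root towards the leaves. -/
lemma child_induction {p : Fin N → Prop} (root : p T.root)
    (step : ∀ n c, T.child n = some c → p c → p n) (n : Fin N) : p n := by
  let r : Fin N → Fin N → Prop := fun b a =>
    Relation.TransGen (fun a b => T.child a = some b) a b
  have : Std.Irrefl r := ⟨T.acyclic⟩
  have : IsTrans (Fin N) r := ⟨fun _ _ _ h h' => h'.trans h⟩
  refine (Finite.wellFounded_of_trans_of_irrefl r).induction n fun n ih => ?_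
  cases hn : T.child n with
  | none => exact T.root_unique n hn ▸ root
  | some c => exact step n c hn (ih c (.single hn))

lemma pre_root : T.pre T.root = ∅ := by
  refine eq_empty_of_forall_notMem fun m => ?_
  rw [mem_pre, not_not]
  refine child_induction T (self_mem_tree T _) (fun n c h hc => mem_tree_of_child T h hc) m

lemma prod_trees {K : Finset (Fin N)} {c : Fin N} (hK : ∀ k ∈ K, T.child k = some c)
    (f : Fin N → ℝ) :
    ∏ m ∈ K.biUnion T.tree, f m = ∏ k ∈ K, ∏ m ∈ T.tree k, f m :=
  prod_biUnion fun k hk k' hk' hne => disjoint_left.2 fun _ hm hm' =>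
    hne (eq_of_mem_trees T (hK k hk) (hK k' hk') hm hm')

lemma tree_eq (n : Fin N) : T.tree n = insert n ((T.parents n).biUnion T.tree) := by
  ext m
  rw [mem_tree_iff]
  simp [mem_parents]

lemma prod_tree (n : Fin N) (f : Fin N → ℝ) :
    ∏ m ∈ T.tree n, f m = f n * ∏ k ∈ T.parents n, ∏ m ∈ T.tree k, f m := by
  rw [tree_eq, prod_insert, prod_trees T fun k => (mem_parents T).1]
  simp only [mem_biUnion, not_exists, not_and]
  exact fun k hk => not_mem_tree_of_child T ((mem_parents T).1 hk)

lemma subtree_eq (n : Fin N) :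
    T.subtree n = T.parents n ∪ (T.parents n).biUnion T.subtree := by
  ext m
  rw [mem_subtree, mem_tree_iff]
  simp only [mem_union, mem_biUnion, mem_parents, mem_subtree]
  constructor
  · rintro ⟨rfl | ⟨k, hk, hm⟩, hne⟩
    · exact absurd rfl hne
    · by_cases hmk : m = k
      · exact .inl (hmk ▸ hk)
      · exact .inr ⟨k, hk, hm, hmk⟩
  · rintro (h | ⟨k, hk, hm, _⟩)
    · exact ⟨.inr ⟨m, h, self_mem_tree T m⟩,
        fun h' => not_mem_tree_of_child T h (h' ▸ self_mem_tree T m)⟩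
    · exact ⟨.inr ⟨k, hk, hm⟩, fun h' => not_mem_tree_of_child T hk (h' ▸ hm)⟩

lemma disjoint_subtrees {K : Finset (Fin N)} {c : Fin N} {A : Finset (Fin N)}
    (hA : ∀ k, T.child k = some c → ∀ a ∈ A, a ∉ T.subtree k)
    (hK : ∀ k ∈ K, T.child k = some c) : Disjoint A (K.biUnion T.subtree) := by
  refine disjoint_left.2 fun a ha h => ?_
  obtain ⟨k, hk, hak⟩ := mem_biUnion.1 h
  exact hA k (hK k hk) a ha hak

lemma mem_tree_child {n c m : Fin N} (h : T.child n = some c) :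
    m ∈ T.tree c ↔ m = c ∨ m ∈ T.tree n ∨ ∃ k ∈ T.siblings n c, m ∈ T.tree k := by
  rw [mem_tree_iff]
  simp only [mem_siblings]
  constructor
  · rintro (h' | ⟨k, hk, hm⟩)
    · exact .inl h'
    · by_cases hkn : k = n
      · exact .inr (.inl (hkn ▸ hm))
      · exact .inr (.inr ⟨k, ⟨hk, hkn⟩, hm⟩)
  · rintro (h' | h' | ⟨k, ⟨hk, _⟩, hm⟩)
    · exact .inl h'
    · exact .inr ⟨n, h, h'⟩
    · exact .inr ⟨k, hk, hm⟩

/-- Outside the tree of `n` lie its child `c`, the nodes outside the tree of `c`, and the trees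
of the siblings of `n`. -/
lemma mem_pre_iff {n c m : Fin N} (h : T.child n = some c) :
    m ∈ T.pre n ↔ m = c ∨ m ∈ T.pre c ∨ ∃ k ∈ T.siblings n c, m ∈ T.tree k := by
  rw [mem_pre, mem_pre, mem_tree_child T h]
  constructor
  · tauto
  · rintro (rfl | h' | ⟨k, hk, hm⟩) hmn
    · exact not_mem_tree_of_child T h hmn
    · tauto
    · rw [mem_siblings] at hk
      exact hk.2 (eq_of_mem_trees T hk.1 h hm hmn)

lemma pre_eq {n c : Fin N} (h : T.child n = some c) :
    T.pre n = {c} ∪ (T.siblings n c ∪ (T.pre c ∪ (T.siblings n c).biUnion T.subtree)) := by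
  ext m
  rw [mem_pre_iff T h]
  simp only [mem_union, mem_singleton, mem_biUnion, mem_subtree]
  constructor
  · rintro (h' | h' | ⟨k, hk, hm⟩)
    · tauto
    · tauto
    · by_cases hmk : m = k
      · subst hmk; tauto
      · exact .inr (.inr (.inr ⟨k, hk, hm, hmk⟩))
  · rintro (h' | h' | h' | ⟨k, hk, hm, _⟩)
    · tauto
    · exact .inr (.inr ⟨m, h', self_mem_tree T m⟩)
    · tauto
    · exact .inr (.inr ⟨k, hk, hm⟩)

lemma prod_pre {n c : Fin N} (h : T.child n = some c) (f : Fin N → ℝ) :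
    ∏ m ∈ T.pre n, f m =
      (∏ m ∈ T.pre c, f m) * f c * ∏ k ∈ T.siblings n c, ∏ m ∈ T.tree k, f m := by
  have hs : ∀ k ∈ T.siblings n c, T.child k = some c := fun k hk => ((mem_siblings T).1 hk).1
  have e : T.pre n = insert c (T.pre c ∪ (T.siblings n c).biUnion T.tree) := by
    ext m
    rw [mem_pre_iff T h]
    simp
  rw [e, prod_insert, prod_union, prod_trees T hs]
  · ring
  · refine disjoint_right.2 fun m hm => ?_
    obtain ⟨k, hk, hmk⟩ := mem_biUnion.1 hm
    rw [mem_pre, not_not, mem_tree_iff]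
    exact .inr ⟨k, hs k hk, hmk⟩
  · simp only [mem_union, mem_pre, mem_biUnion, not_or, not_not, not_exists, not_and]
    exact ⟨self_mem_tree T c, fun k hk => not_mem_tree_of_child T (hs k hk)⟩

lemma not_mem_subtree_of_pre {k n m : Fin N} (hk : T.child k = some n) (hm : m ∈ T.pre n) :
    m ∉ T.subtree k := fun h =>
  (mem_pre T).1 hm ((mem_tree_iff T).2 (.inr ⟨k, hk, ((mem_subtree T).1 h).1⟩))

/-! ### Message passing -/

/-- The total factor of node `m` in the joint probability: feature likelihood times class
factor. -/
noncomputable def weight (π ρ : ℝ) (px : Fin N → Fin 2 → ℝ) (m : Fin N) (Y : Fin N → Fin 2) : ℝ :=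
  px m (Y m) * nodeFactor T π ρ Y m

variable {T} {π ρ : ℝ} {px : Fin N → Fin 2 → ℝ}

lemma ignores_weight {m : Fin N} {A : Finset (Fin N)} (hm : m ∉ A)
    (hp : ∀ k, T.child k = some m → k ∉ A) : Ignores (weight T π ρ px m) A := by
  intro Y Y' h
  have : ∏ k ∈ T.parents m, (Y k : ℕ) = ∏ k ∈ T.parents m, (Y' k : ℕ) :=
    prod_congr rfl fun k hk => by rw [h k (hp k ((mem_parents T).1 hk))]
  simp only [weight, nodeFactor, h m hm, this]

lemma ignores_weight_of_pre {m n k : Fin N} (hk : T.child k = some n) (hm : m ∈ T.pre n) :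
    Ignores (weight T π ρ px m) (T.subtree k) := by
  refine ignores_weight (not_mem_subtree_of_pre T hk hm) fun j hj hjk => ?_
  rcases eq_or_child_mem_tree T ((mem_subtree T).1 hjk).1 with h | ⟨c, hc, hck⟩
  · exact ((mem_subtree T).1 hjk).2 h
  · obtain rfl : c = m := Option.some.inj (hc.symm.trans hj)
    exact (mem_pre T).1 hm ((mem_tree_iff T).2 (.inr ⟨k, hk, hck⟩))

lemma ignores_weight_child {n k : Fin N} (hk : T.child k = some n) :
    Ignores (weight T π ρ px n) (T.subtree k) :=
  ignores_weight (fun h => not_mem_tree_of_child T hk ((mem_subtree T).1 h).1)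
    fun _ hj => not_mem_subtree_of_siblings T hj hk

lemma ignores_weight_sibling {m n k k' : Fin N} (hk : T.child k = some n)
    (hk' : T.child k' = some n) (hne : k ≠ k') (hm : m ∈ T.tree k) :
    Ignores (weight T π ρ px m) (T.subtree k') :=
  ignores_weight (fun h => hne (eq_of_mem_trees T hk hk' hm ((mem_subtree T).1 h).1))
    fun _ hj h => hne (eq_of_mem_trees T hk hk' (mem_tree_of_child T hj hm)
      ((mem_subtree T).1 h).1)

variable {fo : Fin N → Fin 2 → ℝ}

/-- Once the forward messages of the nodes in a set `K` of parents of `c` are known to sum out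
the corresponding subtrees, all these subtrees can be summed out simultaneously. -/
lemma sumOver_subtrees {c : Fin N} (K : Finset (Fin N)) (hK : ∀ k ∈ K, T.child k = some c)
    (hfo : ∀ k ∈ K, ∀ σ, sumOver (T.subtree k)
      (fun Y => ∏ m ∈ T.tree k, weight T π ρ px m Y) σ = fo k (σ k)) :
    ∀ (G : (Fin N → Fin 2) → ℝ), (∀ k ∈ K, Ignores G (T.subtree k)) → ∀ σ,
    sumOver (K.biUnion T.subtree)
      (fun Y => G Y * ∏ k ∈ K, ∏ m ∈ T.tree k, weight T π ρ px m Y) σ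
        = G σ * ∏ k ∈ K, fo k (σ k) := by
  induction K using Finset.induction_on with
  | empty => intro G _ σ; simp [sumOver_empty]
  | insert k K hkK ih =>
    intro G hG σ
    have hk := hK k (mem_insert_self _ _)
    have hK' : ∀ j ∈ K, T.child j = some c := fun j hj => hK j (mem_insert_of_mem hj)
    have hne : ∀ j ∈ K, k ≠ j := fun j hj h => hkK (h ▸ hj)
    rw [biUnion_insert, sumOver_union]
    · have e : ∀ Y, sumOver (K.biUnion T.subtree)
          (fun Y => G Y * ∏ j ∈ insert k K, ∏ m ∈ T.tree j, weight T π ρ px m Y) Y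
          = (G Y * ∏ j ∈ K, fo j (Y j)) * ∏ m ∈ T.tree k, weight T π ρ px m Y := by
        intro Y
        rw [mul_right_comm, ← ih hK' (fun j hj => hfo j (mem_insert_of_mem hj))
          (fun Y => G Y * ∏ m ∈ T.tree k, weight T π ρ px m Y)]
        · exact sumOver_congr (fun Y => by rw [prod_insert hkK]; ring) _
        · exact fun j hj => (hG j (mem_insert_of_mem hj)).mul
            (.prod fun m hm => ignores_weight_sibling hk (hK' j hj) (hne j hj) hm)
      rw [sumOver_congr e, sumOver_mul, hfo k (mem_insert_self _ _), prod_insert hkK]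
      · ring
      · exact (hG k (mem_insert_self _ _)).mul (.prod fun j hj =>
          ignores_label (not_mem_subtree_of_siblings T (hK' j hj) hk) (fo j))
    · refine disjoint_left.2 fun m hm h => ?_
      obtain ⟨j, hj, hmj⟩ := mem_biUnion.1 h
      exact hne j hj (eq_of_mem_trees T hk (hK' j hj) ((mem_subtree T).1 hm).1
        ((mem_subtree T).1 hmj).1)

variable {fi : Fin N → Fin 2 → ℝ}

/-- The outgoing forward message of `n` is the product of all factors in the tree of `n`, with
every label but that of `n` summed out. -/
lemma forward
    (hfiLeaf : ∀ n, T.IsLeaf n → ∀ y : Fin 2, fi n y = leafPrior π y)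
    (hfiInt : ∀ n, ¬ T.IsLeaf n → ∀ y : Fin 2,
      fi n y = ∑ u ∈ assignments (T.parents n),
        transProb ρ (y : ℕ) (∏ k ∈ T.parents n, (u k : ℕ)) *
          ∏ k ∈ T.parents n, fo k (u k))
    (hfo : ∀ n y, fo n y = fi n y * px n y) (n : Fin N) : ∀ σ,
    sumOver (T.subtree n) (fun Y => ∏ m ∈ T.tree n, weight T π ρ px m Y) σ = fo n (σ n) := by
  refine parents_induction T (p := fun n => ∀ σ, sumOver (T.subtree n)
    (fun Y => ∏ m ∈ T.tree n, weight T π ρ px m Y) σ = fo n (σ n)) ?_ n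
  intro n ih σ
  have hP : ∀ k ∈ T.parents n, T.child k = some n := fun k => (mem_parents T).1
  rw [subtree_eq, sumOver_union (disjoint_subtrees T (fun k hk a ha =>
    not_mem_subtree_of_siblings T (hP a ha) hk) hP),
    sumOver_congr (G := fun Y => weight T π ρ px n Y * ∏ k ∈ T.parents n, fo k (Y k))]
  swap
  · intro Y
    rw [← sumOver_subtrees _ hP (fun k hk => ih k (hP k hk)) (weight T π ρ px n)
      fun k hk => ignores_weight_child (hP k hk)]
    exact sumOver_congr (fun Y => prod_tree T n _) _
  by_cases hl : T.IsLeaf n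
  · have hl' : T.parents n = ∅ := hl
    rw [hl', sumOver_empty, hfo, hfiLeaf n hl, weight, nodeFactor, if_pos hl]
    simp [mul_comm]
  · rw [hfo, hfiInt n hl, sum_mul]
    refine sumOver_eq_assignments _ _ _ fun Y u hσ hu => ?_
    have h1 : Y n = σ n := hσ n fun h => not_mem_tree_of_child T (hP n h) (self_mem_tree T n)
    have h2 : ∏ k ∈ T.parents n, (Y k : ℕ) = ∏ k ∈ T.parents n, (u k : ℕ) :=
      prod_congr rfl fun k hk => by rw [hu k hk]
    have h3 : ∏ k ∈ T.parents n, fo k (Y k) = ∏ k ∈ T.parents n, fo k (u k) :=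
      prod_congr rfl fun k hk => by rw [hu k hk]
    rw [weight, nodeFactor, if_neg hl, h1, h2, h3]
    ring

variable {gi go : Fin N → Fin 2 → ℝ}

/-- The incoming backward message of `n` is the product of all factors outside the tree of `n`,
with every label outside that tree summed out. -/
lemma backward
    (hF : ∀ k σ, sumOver (T.subtree k)
      (fun Y => ∏ m ∈ T.tree k, weight T π ρ px m Y) σ = fo k (σ k))
    (hgiRoot : ∀ y : Fin 2, gi T.root y = 1)
    (hgiInt : ∀ n c, T.child n = some c → ∀ y : Fin 2,
      gi n y = ∑ yc : Fin 2, ∑ u ∈ assignments (T.siblings n c),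
        go c yc * transProb ρ (yc : ℕ) ((y : ℕ) * ∏ k ∈ T.siblings n c, (u k : ℕ)) *
          ∏ k ∈ T.siblings n c, fo k (u k))
    (hgo : ∀ n y, go n y = gi n y * px n y) (n : Fin N) : ∀ σ,
    sumOver (T.pre n) (fun Y => ∏ m ∈ T.pre n, weight T π ρ px m Y) σ = gi n (σ n) := by
  refine child_induction T (p := fun n => ∀ σ, sumOver (T.pre n)
    (fun Y => ∏ m ∈ T.pre n, weight T π ρ px m Y) σ = gi n (σ n)) ?_ ?_ n
  · intro σ
    rw [pre_root, sumOver_empty, prod_empty, hgiRoot]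
  intro n c h ih σ
  have hS : ∀ k ∈ T.siblings n c, T.child k = some c := fun k hk => ((mem_siblings T).1 hk).1
  have hcc : T.child c ≠ some c := fun hc => T.acyclic c (.single hc)
  have hcS : c ∉ T.siblings n c := fun hc => hcc (hS c hc)
  have hSpre : ∀ k, T.child k = some c → k ∉ T.pre c := fun k hk hk' =>
    (mem_pre T).1 hk' (mem_tree_of_child T hk (self_mem_tree T c))
  have hcpre : c ∉ T.pre c := fun hc => (mem_pre T).1 hc (self_mem_tree T c)
  have d1 : Disjoint (T.pre c) ((T.siblings n c).biUnion T.subtree) :=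
    disjoint_subtrees T (fun k hk a ha => not_mem_subtree_of_pre T hk ha) hS
  have d2 : Disjoint (T.siblings n c) (T.pre c ∪ (T.siblings n c).biUnion T.subtree) :=
    disjoint_union_right.2 ⟨disjoint_left.2 fun k hk => hSpre k (hS k hk),
      disjoint_subtrees T (fun k hk a ha => not_mem_subtree_of_siblings T (hS a ha) hk) hS⟩
  have d3 : Disjoint {c} (T.siblings n c ∪ (T.pre c ∪ (T.siblings n c).biUnion T.subtree)) := by
    refine disjoint_union_right.2 ⟨disjoint_singleton_left.2 hcS, disjoint_union_right.2
      ⟨disjoint_singleton_left.2 hcpre, disjoint_subtrees T (c := c) (fun k hk a ha hak => ?_) hS⟩⟩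
    rw [mem_singleton.1 ha] at hak
    exact not_mem_tree_of_child T hk ((mem_subtree T).1 hak).1
  -- Sum out the strict subtrees of the siblings, then everything outside the tree of `c`.
  have e1 : ∀ Y, sumOver ((T.siblings n c).biUnion T.subtree)
      (fun Y => ∏ m ∈ T.pre n, weight T π ρ px m Y) Y
      = (weight T π ρ px c Y * ∏ k ∈ T.siblings n c, fo k (Y k)) *
        ∏ m ∈ T.pre c, weight T π ρ px m Y := by
    intro Y
    have := sumOver_subtrees _ hS (fun k _ => hF k)
      (fun Y => (∏ m ∈ T.pre c, weight T π ρ px m Y) * weight T π ρ px c Y)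
      (fun k hk => Ignores.mul (.prod fun m hm => ignores_weight_of_pre (hS k hk) hm)
        (ignores_weight_child (hS k hk))) Y
    rw [sumOver_congr fun Y => prod_pre T h _, this]
    ring
  have e2 : ∀ Y, sumOver (T.pre c ∪ (T.siblings n c).biUnion T.subtree)
      (fun Y => ∏ m ∈ T.pre n, weight T π ρ px m Y) Y
      = (weight T π ρ px c Y * ∏ k ∈ T.siblings n c, fo k (Y k)) * gi c (Y c) := by
    intro Y
    rw [sumOver_union d1, sumOver_congr e1, sumOver_mul, ih]
    exact (ignores_weight hcpre hSpre).mul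
      (.prod fun k hk => ignores_label (hSpre k (hS k hk)) (fo k))
  have hsum : sumOver (T.pre n) (fun Y => ∏ m ∈ T.pre n, weight T π ρ px m Y) σ
      = sumOver {c} (sumOver (T.siblings n c) fun Y =>
        (weight T π ρ px c Y * ∏ k ∈ T.siblings n c, fo k (Y k)) * gi c (Y c)) σ := by
    conv_lhs => rw [pre_eq T h]
    rw [sumOver_union d3, ← pre_eq T h]
    refine sumOver_congr (fun Y => ?_) σ
    rw [sumOver_union d2, sumOver_congr e2]
  rw [hsum, sumOver_singleton, hgiInt n c h]
  refine sum_congr rfl fun yc _ => ?_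
  refine sumOver_eq_assignments _ _ _ fun Y u hσ hu => ?_
  have hnc : n ≠ c := fun hnc => hcc (hnc ▸ h)
  have h1 : Y c = yc := by rw [hσ c hcS, Function.update_self]
  have h2 : Y n = σ n := by
    rw [hσ n (fun hn => ((mem_siblings T).1 hn).2 rfl), Function.update_of_ne hnc]
  have h3 : ∏ k ∈ T.siblings n c, fo k (Y k) = ∏ k ∈ T.siblings n c, fo k (u k) :=
    prod_congr rfl fun k hk => by rw [hu k hk]
  have hnP : n ∈ T.parents c := (mem_parents T).2 h
  have h4 : ∏ k ∈ T.parents c, (Y k : ℕ) = (σ n : ℕ) * ∏ k ∈ T.siblings n c, (u k : ℕ) := by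
    rw [← mul_prod_erase _ _ hnP, h2, RevTree.siblings, sdiff_singleton_eq_erase]
    congr 1
    refine prod_congr rfl fun k hk => ?_
    rw [hu k (by rwa [RevTree.siblings, sdiff_singleton_eq_erase])]
  have hl : ¬ T.IsLeaf c := fun hl => ne_empty_of_mem hnP hl
  rw [weight, nodeFactor, if_neg hl, h1, h3, h4, hgo]
  ring

end HMT

/-- Theorem 1, part 3: for a non-leaf node `n`, label `y` and any
assignment `u` of labels to its parents, the unnormalized quantity
`P′(y_n, y_{k∈P_n}) = [∏_{k∈P_n} f_k^o(y_k)] · g_n^o(y_n) · P(y_n|y_{k∈P_n})`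
equals the joint probability `P(X, y_n, y_{k∈P_n})`. -/
theorem unnormalized_parent_child_marginal_eq_joint
{N : ℕ} (T : RevTree N) (π ρ : ℝ)
    (hπ : π ∈ Set.Ioo (0 : ℝ) 1) (hρ : ρ ∈ Set.Ioo (0 : ℝ) 1)
    (px : Fin N → Fin 2 → ℝ) (hpx : ∀ n y, 0 ≤ px n y)
(fi fo : Fin N → Fin 2 → ℝ)
    (hfiLeaf : ∀ n, T.IsLeaf n → ∀ y : Fin 2, fi n y = leafPrior π y)
    (hfiInt : ∀ n, ¬ T.IsLeaf n → ∀ y : Fin 2,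
      fi n y = ∑ u ∈ assignments (T.parents n),
        transProb ρ (y : ℕ) (∏ k ∈ T.parents n, (u k : ℕ)) *
          ∏ k ∈ T.parents n, fo k (u k))
    (hfo : ∀ n y, fo n y = fi n y * px n y)
(gi go : Fin N → Fin 2 → ℝ)
    (hgiRoot : ∀ y : Fin 2, gi T.root y = 1)
    (hgiInt : ∀ n c, T.child n = some c → ∀ y : Fin 2,
      gi n y = ∑ yc : Fin 2, ∑ u ∈ assignments (T.siblings n c),
        go c yc * transProb ρ (yc : ℕ) ((y : ℕ) * ∏ k ∈ T.siblings n c, (u k : ℕ)) *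
          ∏ k ∈ T.siblings n c, fo k (u k))
    (hgo : ∀ n y, go n y = gi n y * px n y) :
    ∀ n : Fin N, ¬ T.IsLeaf n → ∀ (y : Fin 2), ∀ u ∈ assignments (T.parents n),
      (∏ k ∈ T.parents n, fo k (u k)) * go n y *
          transProb ρ (y : ℕ) (∏ k ∈ T.parents n, (u k : ℕ)) =
        marginal T π ρ px Finset.univ (insert n (T.parents n))
          (Function.update u n y) := by
  intro n hn y u _
  have hF := HMT.forward hfiLeaf hfiInt hfo
  have hB := HMT.backward hF hgiRoot hgiInt hgo
  have hP : ∀ k ∈ T.parents n, T.child k = some n := fun k => (HMT.mem_parents T).1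
  have hnP : n ∉ T.parents n := fun h => T.acyclic n (.single (hP n h))
  set σ := Function.update u n y with hσ
  have hσn : σ n = y := by simp [hσ]
  have hσk : ∀ k ∈ T.parents n, σ k = u k := fun k hk => by
    rw [hσ, Function.update_of_ne (ne_of_mem_of_not_mem hk hnP)]
  have hprepar : ∀ k, T.child k = some n → k ∉ T.pre n := fun k hk hk' =>
    (HMT.mem_pre T).1 hk' (HMT.mem_tree_of_child T hk (HMT.self_mem_tree T n))
  have hnpre : n ∉ T.pre n := fun h => (HMT.mem_pre T).1 h (HMT.self_mem_tree T n)
  -- The nodes that are summed out lie outside the tree of `n` or strictly above a parent of `n`.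
  have hset : ∀ m, m ∉ T.pre n ∪ (T.parents n).biUnion T.subtree ↔
      m ∈ insert n (T.parents n) := by
    intro m
    have h1 : m ∈ T.subtree n ↔
        m ∈ T.parents n ∨ m ∈ (T.parents n).biUnion T.subtree := by rw [HMT.subtree_eq, mem_union]
    have h2 : m ∈ T.parents n → m ∉ (T.parents n).biUnion T.subtree := fun hm hm' => by
      obtain ⟨k, hk, hmk⟩ := mem_biUnion.1 hm'
      exact HMT.not_mem_subtree_of_siblings T (hP m hm) (hP k hk) hmk
    have h3 : m = n → m ∈ T.tree n := fun h => h ▸ HMT.self_mem_tree T m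
    rw [HMT.mem_subtree] at h1
    rw [mem_union, HMT.mem_pre, mem_insert]
    tauto
  have hd : Disjoint (T.pre n) ((T.parents n).biUnion T.subtree) :=
    HMT.disjoint_subtrees T (fun k hk a ha => HMT.not_mem_subtree_of_pre T hk ha) hP
  have hprod : ∀ Y : Fin N → Fin 2,
      (∏ m, px m (Y m)) * ∏ m, nodeFactor T π ρ Y m =
      ((∏ m ∈ T.pre n, HMT.weight T π ρ px m Y) * HMT.weight T π ρ px n Y) *
        ∏ k ∈ T.parents n, ∏ m ∈ T.tree k, HMT.weight T π ρ px m Y := by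
    intro Y
    rw [← prod_mul_distrib, mul_assoc, ← HMT.prod_tree T n fun m => HMT.weight T π ρ px m Y,
      RevTree.pre,
      prod_sdiff (subset_univ _)]
    rfl
  have hmarg : marginal T π ρ px univ (insert n (T.parents n)) σ =
      HMT.sumOver (T.pre n ∪ (T.parents n).biUnion T.subtree)
        (fun Y => (∏ m, px m (Y m)) * ∏ m, nodeFactor T π ρ Y m) σ := by
    unfold marginal HMT.sumOver
    simp only [hset]
  have e : ∀ Y, HMT.sumOver ((T.parents n).biUnion T.subtree)
      (fun Y => (∏ m, px m (Y m)) * ∏ m, nodeFactor T π ρ Y m) Y =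
      (HMT.weight T π ρ px n Y * ∏ k ∈ T.parents n, fo k (Y k)) *
        ∏ m ∈ T.pre n, HMT.weight T π ρ px m Y := by
    intro Y
    have := HMT.sumOver_subtrees _ hP (fun k _ => hF k)
      (fun Y => (∏ m ∈ T.pre n, HMT.weight T π ρ px m Y) * HMT.weight T π ρ px n Y)
      (fun k hk => HMT.Ignores.mul
        (.prod fun m hm => HMT.ignores_weight_of_pre (hP k hk) hm)
        (HMT.ignores_weight_child (hP k hk))) Y
    rw [HMT.sumOver_congr hprod, this]
    ring
  rw [hmarg, HMT.sumOver_union hd, HMT.sumOver_congr e, HMT.sumOver_mul, hB, hσn, hgo,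
    HMT.weight, nodeFactor, if_neg hn, hσn,
    prod_congr rfl fun k hk => congrArg (fo k) (hσk k hk),
    prod_congr rfl fun k hk => congrArg (fun z : Fin 2 => (z : ℕ)) (hσk k hk)]
  · ring
  · exact (HMT.ignores_weight hnpre hprepar).mul
      (.prod fun k hk => HMT.ignores_label (hprepar k (hP k hk)) (fo k))
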